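/- arXiv:1510.03767 — 6 statements merged into one kernel-verified Lean document; each statement's English description precedes it below -/
import Mathlib

section
/- Let p be a prime number, let r and s be integers with 0 ≤ r ≤ s, and let ℓ and j be positive integers each relatively prime to p such that p^r·j ≤ p^s·ℓ. Then the p-adic valuation of the binomial coefficient C(p^s·ℓ, p^r·j) is at least s − r. -/
/-- In `C(n, k) * k = n * C(n - 1, k - 1)`, the right-hand side is a multiple of `n`. -/
theorem Nat.dvd_choose_mul_self {n k : ℕ} (hn : n ≠ 0) (hk : k ≠ 0) :
    n ∣ n.choose k * k := by
  obtain ⟨n, rfl⟩ := Nat.exists_eq_succ_of_ne_zero hn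
  obtain ⟨k, rfl⟩ := Nat.exists_eq_succ_of_ne_zero hk
  exact ⟨n.choose k, (Nat.add_one_mul_choose_eq n k).symm⟩

/-- Corollary on p-adic valuations of binomial coefficients (lower bound):
if `p` is prime, `0 ≤ r ≤ s`, and `ℓ`, `j` are positive integers relatively
prime to `p` with `p^r * j ≤ p^s * ℓ`, then
`v_p (C(p^s * ℓ, p^r * j)) ≥ s - r`. -/
theorem padicValNat_choose_prime_pow_mul_ge (p : ℕ) (hp : p.Prime) (r s : ℕ) (hrs : r ≤ s)
    (ℓ j : ℕ) (hℓ : 0 < ℓ) (hj : 0 < j) (hℓp : Nat.Coprime ℓ p) (hjp : Nat.Coprime j p)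
    (hle : p ^ r * j ≤ p ^ s * ℓ) :
    s - r ≤ padicValNat p ((p ^ s * ℓ).choose (p ^ r * j)) := by
  rw [← padicValNat_dvd_iff_le_of_ne_one hp.ne_one (Nat.choose_pos hle).ne']
  have hpr : 0 < p ^ r := pow_pos hp.pos r
  have hdvd : p ^ s ∣ (p ^ s * ℓ).choose (p ^ r * j) * (p ^ r * j) :=
    (dvd_mul_right _ _).trans <| Nat.dvd_choose_mul_self
      (mul_pos (pow_pos hp.pos s) hℓ).ne' (mul_pos hpr hj).ne'
  have hdvd' : p ^ r * p ^ (s - r) ∣ p ^ r * ((p ^ s * ℓ).choose (p ^ r * j) * j) := by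
    rwa [← pow_add, Nat.add_sub_of_le hrs, mul_left_comm]
  exact (hjp.symm.pow_left _).dvd_of_dvd_mul_right (Nat.dvd_of_mul_dvd_mul_left hpr hdvd')
end

section
/- Let p be a prime number, let r and s be integers with 0 ≤ r ≤ s, and let ℓ and j be positive integers each relatively prime to p such that p^r·j < p^s. Then the p-adic valuation of the binomial coefficient C(p^s·ℓ, p^r·j) is exactly s − r. -/
/-- Adding `k` and `n - k` produces a carry modulo `m` iff the residue of `n` is smaller than
that of `k`. -/
theorem le_mod_add_sub_mod_iff {m k n : ℕ} (hm : 0 < m) (hkn : k ≤ n) :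
    m ≤ k % m + (n - k) % m ↔ n % m < k % m := by
  have hadd := Nat.add_mod_eq_ite (m := k) (n := n - k) (k := m)
  rw [Nat.add_sub_cancel' hkn] at hadd
  have hk := Nat.mod_lt k hm
  have hnk := Nat.mod_lt (n - k) hm
  split_ifs at hadd <;> lia

/-- For `k = p ^ r * j < p ^ s` and `n = p ^ s * ℓ` with `j`, `ℓ` prime to `p`, the residue of `n`
modulo `p ^ i` is smaller than that of `k` exactly when `r < i ≤ s`. -/
theorem prime_pow_mul_mod_lt_iff {p r s ℓ j : ℕ} (hp : p.Prime) (hℓp : ℓ.Coprime p)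
    (hjp : j.Coprime p) (hlt : p ^ r * j < p ^ s) (i : ℕ) :
    p ^ s * ℓ % p ^ i < p ^ r * j % p ^ i ↔ r < i ∧ i ≤ s := by
  have hdvd {a : ℕ} (ha : a.Coprime p) : ¬ p ∣ a := fun h =>
    hp.one_lt.ne' (ha.symm.eq_one_of_dvd h)
  rcases le_or_gt i s with his | hsi
  · rw [Nat.mod_eq_zero_of_dvd ((pow_dvd_pow p his).mul_right ℓ), Nat.pos_iff_ne_zero, ne_eq,
      ← Nat.dvd_iff_mod_eq_zero]
    refine ⟨fun h => ⟨not_le.mp fun hir => h ((pow_dvd_pow p hir).mul_right j), his⟩, ?_⟩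
    rintro ⟨hri, -⟩ h
    have hsucc : p ^ r * p ∣ p ^ r * j := pow_succ p r ▸ (pow_dvd_pow p hri).trans h
    exact hdvd hjp (Nat.dvd_of_mul_dvd_mul_left (pow_pos hp.pos r) hsucc)
  · refine iff_of_false (not_lt.mpr ?_) fun h => hsi.not_ge h.2
    obtain ⟨d, rfl⟩ := Nat.exists_eq_add_of_lt hsi
    have hpos : 0 < ℓ % p ^ (d + 1) := Nat.pos_of_ne_zero fun h =>
      hdvd hℓp ((dvd_pow_self p d.succ_ne_zero).trans (Nat.dvd_of_mod_eq_zero h))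
    rw [add_assoc, pow_add, Nat.mul_mod_mul_left]
    exact (Nat.mod_le _ _).trans (hlt.le.trans (Nat.le_mul_of_pos_right _ hpos))

/-- Corollary on p-adic valuations of binomial coefficients (equality case):
if `p` is prime, `0 ≤ r ≤ s`, and `ℓ`, `j` are positive integers relatively
prime to `p` with `p^r * j < p^s`, then
`v_p (C(p^s * ℓ, p^r * j)) = s - r`. -/
theorem padicValNat_choose_prime_pow_mul_eq (p : ℕ) (hp : p.Prime) (r s : ℕ) (hrs : r ≤ s)
    (ℓ j : ℕ) (hℓ : 0 < ℓ) (hj : 0 < j) (hℓp : Nat.Coprime ℓ p) (hjp : Nat.Coprime j p)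
    (hlt : p ^ r * j < p ^ s) :
    padicValNat p ((p ^ s * ℓ).choose (p ^ r * j)) = s - r := by
  have : Fact p.Prime := ⟨hp⟩
  have hkn : p ^ r * j ≤ p ^ s * ℓ := hlt.le.trans (Nat.le_mul_of_pos_right _ hℓ)
  have hlog : Nat.log p (p ^ s * ℓ) < Nat.log p (p ^ s * ℓ) + s + 1 := by lia
  rw [padicValNat_choose hkn hlog, ← Nat.card_Ioc r s]
  congr 1
  ext i
  rw [Finset.mem_filter, le_mod_add_sub_mod_iff (pow_pos hp.pos i) hkn,
    prime_pow_mul_mod_lt_iff hp hℓp hjp hlt, Finset.mem_Ico, Finset.mem_Ioc]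
  lia
end

section
/- Let m ≥ 2 be an integer, let p be a prime number with v_p(m) = s > 0, and let ℓ be a positive integer relatively prime to p. Then there exists an integer r ≥ 1 such that: (1) r ≡ 0 (mod ℓ); (2) r ≡ 1 (mod p^s); and (3) v_p(C(r + m − 1, r)) = s. -/
/-- Adding a multiple of `p ^ N` does not change the valuation of a positive `a < p ^ N`. -/
lemma padicValNat_add_pow_mul {p : ℕ} [Fact p.Prime] {N a : ℕ} (ha : a ≠ 0) (haN : a < p ^ N)
    (t : ℕ) : padicValNat p (a + p ^ N * t) = padicValNat p a := by
  have hp : p.Prime := Fact.out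
  have hlt : padicValNat p a < N :=
    (Nat.pow_lt_pow_iff_right hp.one_lt).1
      ((Nat.le_of_dvd (Nat.pos_of_ne_zero ha) pow_padicValNat_dvd).trans_lt haN)
  have hne : a + p ^ N * t ≠ 0 := by omega
  have key : ∀ e ≤ N, (p ^ e ∣ a + p ^ N * t ↔ p ^ e ∣ a) := fun e he =>
    (Nat.dvd_add_iff_left ((pow_dvd_pow p he).mul_right t)).symm
  apply le_antisymm
  · by_contra! h
    have h₁ := (key _ hlt).1 ((padicValNat_dvd_iff_le hne).2 h)
    exact absurd ((padicValNat_dvd_iff_le ha).1 h₁) (by omega)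
  · exact (padicValNat_dvd_iff_le hne).1 ((key _ hlt.le).2 pow_padicValNat_dvd)

/-- If `r = 1 + p ^ N * t`, then `C(r + k, k)` has the same valuation as `C(1 + k, k) = k + 1`,
as long as `k + 1 < p ^ N`. -/
lemma padicValNat_choose_one_add_pow_mul {p : ℕ} [Fact p.Prime] (N t : ℕ) :
    ∀ k : ℕ, k + 1 < p ^ N →
      padicValNat p ((1 + p ^ N * t + k).choose k) = padicValNat p (k + 1)
  | 0, _ => by simp
  | k + 1, hk => by
    have ih := padicValNat_choose_one_add_pow_mul (p := p) N t k (by omega)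
    have hsucc := Nat.add_one_mul_choose_eq (1 + p ^ N * t + k) k
    have hval := congrArg (padicValNat p) hsucc
    rw [padicValNat.mul (by omega) (Nat.choose_ne_zero (by omega)),
      padicValNat.mul (Nat.choose_ne_zero (by omega)) (by omega), ih,
      show 1 + p ^ N * t + k + 1 = (k + 1 + 1) + p ^ N * t by ring,
      padicValNat_add_pow_mul (by omega) hk] at hval
    rw [show 1 + p ^ N * t + (k + 1) = (k + 1 + 1) + p ^ N * t by ring]
    omega

/-- Technical lemma: for `m ≥ 2`, a prime `p` with `v_p(m) = s > 0`, and a positive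
integer `ℓ` relatively prime to `p`, there is an integer `r ≥ 1` with `r ≡ 0 (mod ℓ)`,
`r ≡ 1 (mod p^s)` and `v_p (C(r + m - 1, r)) = s`. -/
theorem exists_r_symmetric_power (m : ℕ) (hm : 2 ≤ m) (p : ℕ) (hp : p.Prime)
    (s : ℕ) (hs : 0 < s) (hvm : padicValNat p m = s)
    (ℓ : ℕ) (hℓ : 0 < ℓ) (hℓp : Nat.Coprime ℓ p) :
    ∃ r : ℕ, 1 ≤ r ∧ ℓ ∣ r ∧ r ≡ 1 [MOD p ^ s] ∧
      padicValNat p ((r + m - 1).choose r) = s := by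
  have : Fact p.Prime := ⟨hp⟩
  have hmN : m < p ^ m := Nat.lt_pow_self hp.one_lt
  have hsm : s ≤ m := by
    rw [← hvm]
    exact (padicValNat_le_nat_log m).trans (Nat.log_le_self p m)
  obtain ⟨r, hrℓ, hrp⟩ := Nat.chineseRemainder (hℓp.pow_right m) 0 1
  have hr : 1 ≤ r := by
    by_contra! h
    obtain rfl : r = 0 := by omega
    have := Nat.le_of_dvd one_pos ((Nat.modEq_zero_iff_dvd).1 hrp.symm)
    omega
  obtain ⟨t, ht⟩ := (Nat.modEq_iff_dvd' hr).1 hrp.symm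
  refine ⟨r, hr, (Nat.modEq_zero_iff_dvd).1 hrℓ, hrp.of_dvd (pow_dvd_pow p hsm), ?_⟩
  obtain ⟨k, rfl⟩ : ∃ k, m = k + 1 := ⟨m - 1, by omega⟩
  rw [show r + (k + 1) - 1 = r + k by omega, Nat.choose_symm_add,
    show r = 1 + p ^ (k + 1) * t by omega, padicValNat_choose_one_add_pow_mul _ _ _ hmN, hvm]
end

section
/- Let p be a prime number, let m ≥ 1 and r ≥ 1 be integers, and let g be a nonnegative integer such that m < p^g and p^g divides r − 1. Then v_p(C(r + m − 1, m − 1)) = v_p(m). -/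
/-- Adding a multiple of `p ^ g` does not change the `p`-adic valuation of a positive integer
below `p ^ g`. -/
theorem padicValNat_add_eq_of_pow_dvd_of_lt {p g N j : ℕ} (hp : p.Prime) (hN : p ^ g ∣ N)
    (hj : 0 < j) (hjg : j < p ^ g) : padicValNat p (N + j) = padicValNat p j := by
  have : Fact p.Prime := ⟨hp⟩
  refine eq_of_forall_le_iff fun i => ?_
  rw [← padicValNat_dvd_iff_le (by omega), ← padicValNat_dvd_iff_le (by omega)]
  rcases le_total i g with hi | hi
  · exact Nat.dvd_add_right ((pow_dvd_pow p hi).trans hN)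
  · have hnot : ¬ p ^ g ∣ j := Nat.not_dvd_of_pos_of_lt hj hjg
    have hle : p ^ g ∣ p ^ i := pow_dvd_pow p hi
    exact ⟨fun h => absurd ((Nat.dvd_add_right hN).1 (hle.trans h)) hnot,
      fun h => absurd (hle.trans h) hnot⟩

/-- If `p` is prime, `m ≥ 1`, `r ≥ 1`, `g ≥ 0`, `m < p^g`, and `p^g ∣ r - 1`, then
`v_p (C(r + m - 1, m - 1)) = v_p(m)`. -/
theorem padicValNat_choose_add_sub_one (p : ℕ) (hp : p.Prime) (m r : ℕ)
    (hm : 1 ≤ m) (hr : 1 ≤ r) (g : ℕ) (hmg : m < p ^ g) (hdvd : p ^ g ∣ r - 1) :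
    padicValNat p ((r + m - 1).choose (m - 1)) = padicValNat p m := by
  have : Fact p.Prime := ⟨hp⟩
  induction m, hm using Nat.le_induction with
  | base => simp
  | succ k hk ih =>
    have ih := ih (by omega)
    have hrec : (r + k) * (r + k - 1).choose (k - 1) = (r + k).choose k * k := by
      have h := Nat.add_one_mul_choose_eq (r + k - 1) (k - 1)
      rwa [Nat.sub_add_cancel (by omega), Nat.sub_add_cancel hk] at h
    have hval := congrArg (padicValNat p) hrec
    have hrk : padicValNat p (r + k) = padicValNat p (k + 1) := by
      rw [← padicValNat_add_eq_of_pow_dvd_of_lt hp hdvd k.succ_pos hmg]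
      congr 1
      omega
    rw [padicValNat.mul (by omega) (Nat.choose_ne_zero (by omega)),
      padicValNat.mul (Nat.choose_ne_zero (by omega)) (by omega), ih, hrk] at hval
    simpa using (Nat.add_right_cancel hval).symm
end

section
/- Let p be a prime number, let ℓ be a positive integer relatively prime to p, and let σ ≥ 0 be an integer. Let m and m' be positive integers with v_p(m) = v_p(m'), m' < p^σ, and m ≤ p^σ·ℓ. Then v_p(C(p^σ·ℓ, m')) ≤ v_p(C(p^σ·ℓ, m)). -/
/-- A carry in base `q` when adding `k` and `n - k` makes the remainder of `n` smaller than
that of `k`. -/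
lemma mod_lt_mod_of_carry {n k q : ℕ} (hq : 0 < q) (hkn : k ≤ n)
    (h : q ≤ k % q + (n - k) % q) : n % q < k % q := by
  have hsum := Nat.add_mod_add_of_le_add_mod h
  rw [Nat.add_sub_cancel' hkn] at hsum
  have := Nat.mod_lt (n - k) hq
  omega

/-- If `q` divides `n` but not `k`, then adding `k` and `n - k` produces a carry in base `q`. -/
lemma carry_of_dvd_of_not_dvd {n k q : ℕ} (hkn : k ≤ n) (hn : q ∣ n) (hk : ¬ q ∣ k) :
    q ≤ k % q + (n - k) % q := by
  by_contra! h
  have hsum := Nat.add_mod_of_add_mod_lt h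
  rw [Nat.add_sub_cancel' hkn, Nat.mod_eq_zero_of_dvd hn] at hsum
  exact hk (Nat.dvd_of_mod_eq_zero (by omega))

/-- If `p` is prime, `ℓ` is a positive integer relatively prime to `p`, `σ ≥ 0`, and
`m`, `m'` are positive integers with `v_p(m) = v_p(m')`, `m' < p^σ`, and `m ≤ p^σ * ℓ`,
then `v_p (C(p^σ * ℓ, m')) ≤ v_p (C(p^σ * ℓ, m))`. -/
theorem padicValNat_choose_mono_of_padicValNat_eq (p : ℕ) (hp : p.Prime)
    (ℓ : ℕ) (hℓ : 0 < ℓ) (hℓp : Nat.Coprime ℓ p) (σ m m' : ℕ)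
    (hm : 0 < m) (hm' : 0 < m') (hval : padicValNat p m = padicValNat p m')
    (hm'lt : m' < p ^ σ) (hmle : m ≤ p ^ σ * ℓ) :
    padicValNat p ((p ^ σ * ℓ).choose m') ≤ padicValNat p ((p ^ σ * ℓ).choose m) := by
  have : Fact p.Prime := ⟨hp⟩
  have hm'le : m' ≤ p ^ σ * ℓ := hm'lt.le.trans (Nat.le_mul_of_pos_right _ hℓ)
  rw [padicValNat_choose hm'le (Nat.lt_succ_self _), padicValNat_choose hmle (Nat.lt_succ_self _)]
  refine Finset.card_le_card (Finset.monotone_filter_right _ fun i _ hi ↦ ?_)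
  have hlt := mod_lt_mod_of_carry (pow_pos hp.pos i) hm'le hi
  have hn : p ^ i ∣ p ^ σ * ℓ := by
    rcases le_total i σ with h | h
    · exact (pow_dvd_pow p h).mul_right ℓ
    · have hdvd : p ^ σ ∣ p ^ σ * ℓ % p ^ i :=
        (Nat.dvd_mod_iff (pow_dvd_pow p h)).2 (dvd_mul_right _ _)
      exact Nat.dvd_of_mod_eq_zero
        (Nat.eq_zero_of_dvd_of_lt hdvd ((hlt.trans_le (Nat.mod_le _ _)).trans hm'lt))
  refine carry_of_dvd_of_not_dvd hmle hn fun hdvd ↦ ?_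
  rw [padicValNat_dvd_iff_le hm.ne', hval, ← padicValNat_dvd_iff_le hm'.ne'] at hdvd
  rw [Nat.mod_eq_zero_of_dvd hdvd] at hlt
  exact Nat.not_lt_zero _ hlt
end

section
/- Let k be a field and let D be a central division algebra over k of degree d > 1. Let n be the least positive integer such that the n-fold tensor power D^{⊗n} (over k) is isomorphic as a k-algebra to a matrix algebra M_t(k) for some positive integer t (n is the period of D). Then a prime number q divides n if and only if q divides d. -/
open scoped TensorProduct

/-- A representation of `S` commuting with a matrix algebra of size `u` is the sum of `u` copies of
a smaller representation of `S`. -/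
theorem exists_rep_of_commute_matrix {k S P : Type*} [Field k] [Ring S] [Algebra k S]
    [AddCommGroup P] [Module k P] [FiniteDimensional k P] {u : ℕ} [NeZero u]
    (f : Matrix (Fin u) (Fin u) k →ₐ[k] Module.End k P) (h : S →ₐ[k] Module.End k P)
    (hc : ∀ X s, Commute (f X) (h s)) :
    ∃ (Q : Submodule k P) (_ : S →ₐ[k] Module.End k Q),
      u * Module.finrank k Q = Module.finrank k P := by
  let E (i j : Fin u) : Module.End k P := f (Matrix.single i j 1)
  have hE (i j l : Fin u) (x : P) : E i j (E j l x) = E i l x := by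
    simp [E, ← Module.End.mul_apply, ← map_mul]
  have hE0 (i j j' l : Fin u) (hj : j ≠ j') (x : P) : E i j (E j' l x) = 0 := by
    simp [E, ← Module.End.mul_apply, ← map_mul, Matrix.single_mul_single_of_ne, hj]
  have hsum (x : P) : ∑ i, E i i x = x := by
    have : ∑ i, E i i = 1 := by
      simp only [E, ← map_sum, Matrix.sum_single_one, map_one]
    simpa using congr($this x)
  have hEc (i j : Fin u) (s : S) (x : P) : h s (E i j x) = E i j (h s x) :=
    congr($((hc (Matrix.single i j 1) s).eq) x).symm
  let Q : Submodule k P := LinearMap.range (E 0 0)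
  have hQ (x : Q) : E 0 0 x = x := by
    obtain ⟨_, y, rfl⟩ := x
    exact hE 0 0 0 y
  have hmaps (s : S) (x : P) (hx : x ∈ Q) : h s x ∈ Q := by
    obtain ⟨y, rfl⟩ := hx
    exact ⟨h s y, (hEc 0 0 s y).symm⟩
  let h' : S →ₐ[k] Module.End k Q := AlgHom.ofLinearMap
    { toFun s := (h s).restrict (hmaps s)
      map_add' s t := by ext; simp
      map_smul' c s := by ext; simp }
    (by ext; simp) (fun s t => by ext; simp)
  let e : P ≃ₗ[k] (Fin u → Q) :=
    { toFun x i := ⟨E 0 i x, E 0 i x, hE 0 0 i x⟩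
      map_add' x y := by ext; simp
      map_smul' c x := by ext; simp
      invFun y := ∑ i, E i 0 (y i)
      left_inv x := by simp [hE, hsum]
      right_inv y := by
        ext i
        simp only [map_sum]
        rw [Finset.sum_eq_single i, hE, hQ]
        · intro j _ hj
          exact hE0 _ _ _ _ hj.symm _
        · simp }
  refine ⟨Q, h', ?_⟩
  rw [e.finrank_eq, Module.finrank_pi_fintype]
  simp

/-- The dimension of a division algebra divides the dimension of each of its representations. -/
theorem finrank_dvd_finrank_of_rep {k E Q : Type*} [Field k] [DivisionRing E] [Algebra k E]
    [AddCommGroup Q] [Module k Q] (h : E →ₐ[k] Module.End k Q) :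
    Module.finrank k E ∣ Module.finrank k Q := by
  let : Module E Q := Module.compHom Q h.toRingHom
  have : IsScalarTower k E Q := ⟨fun c x q => by
    change h (c • x) q = c • h x q
    simp⟩
  exact ⟨_, (Module.finrank_mul_finrank k E Q).symm⟩

theorem mul_finrank_dvd_finrank_of_rep_matrix {k E P : Type*} [Field k] [DivisionRing E]
    [Algebra k E] [AddCommGroup P] [Module k P] [FiniteDimensional k P] {u : ℕ} [NeZero u]
    (f : Matrix (Fin u) (Fin u) E →ₐ[k] Module.End k P) :
    u * Module.finrank k E ∣ Module.finrank k P := by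
  obtain ⟨Q, h, hQ⟩ := exists_rep_of_commute_matrix (f.comp (Algebra.ofId k E).mapMatrix)
    (f.comp (Matrix.scalarAlgHom (Fin u) k)) (fun X s => by
      refine Commute.map ?_ f
      refine (Matrix.scalar_commute_iff.2 ?_).symm
      ext i j
      simp [Algebra.ofId_apply, Algebra.commutes])
  rw [← hQ]
  exact mul_dvd_mul_left u (finrank_dvd_finrank_of_rep h)

/-- A simple algebra of dimension `δ ^ 2` is split if it has a representation of dimension `δ * N`
with `N` coprime to `δ`. -/
theorem exists_algEquiv_matrix_of_coprime_rep {k R P : Type*} [Field k] [Ring R] [Algebra k R]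
    [FiniteDimensional k R] [IsSimpleRing R] [AddCommGroup P] [Module k P]
    [FiniteDimensional k P] (f : R →ₐ[k] Module.End k P) {δ N : ℕ}
    (hR : Module.finrank k R = δ ^ 2) (hP : Module.finrank k P = δ * N) (hδN : δ.Coprime N) :
    Nonempty (R ≃ₐ[k] Matrix (Fin δ) (Fin δ) k) := by
  have : IsArtinianRing R := IsArtinianRing.of_finite k R
  obtain ⟨u, hu, E, _, _, _, ⟨e⟩⟩ :=
    IsSimpleRing.exists_algEquiv_matrix_divisionRing_finite k R
  have hu0 : 0 < u := Nat.pos_of_ne_zero hu.out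
  have hdim : u ^ 2 * Module.finrank k E = δ ^ 2 := by
    rw [← hR, e.toLinearEquiv.finrank_eq, Module.finrank_matrix]
    simp [sq]
  obtain ⟨c, rfl⟩ : u ∣ δ := (Nat.pow_dvd_pow_iff two_ne_zero).1 ⟨_, hdim.symm⟩
  have hE : Module.finrank k E = c ^ 2 := by
    rw [mul_pow] at hdim
    exact Nat.eq_of_mul_eq_mul_left (by positivity) hdim
  have hc0 : 0 < c := by
    have : 0 < Module.finrank k E := Module.finrank_pos
    rw [hE] at this
    exact Nat.pos_of_ne_zero (by rintro rfl; simp at this)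
  have hdvd := mul_finrank_dvd_finrank_of_rep_matrix (f.comp e.symm.toAlgHom)
  rw [hE, hP, sq, ← mul_assoc, Nat.mul_dvd_mul_iff_left (by positivity)] at hdvd
  obtain rfl : c = 1 :=
    Nat.eq_one_of_dvd_coprimes hδN (Dvd.intro_left u rfl) hdvd
  have hbot : (⊥ : Subalgebra k E) = ⊤ :=
    Subalgebra.bot_eq_top_of_finrank_eq_one (by simpa using hE)
  have hbij : Function.Bijective (Algebra.ofId k E) :=
    ⟨(algebraMap k E).injective, fun x => Algebra.mem_bot.1 (hbot ▸ Algebra.mem_top)⟩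
  rw [mul_one]
  exact ⟨e.trans (AlgEquiv.ofBijective _ hbij).symm.mapMatrix⟩

theorem Function.Injective.extend_update {ι κ A : Type*} [DecidableEq ι] [DecidableEq κ]
    {j : ι → κ} (hj : j.Injective) (x : ι → A) (y : κ → A) (i : ι) (a : A) :
    Function.extend j (Function.update x i a) y =
      Function.update (Function.extend j x y) (j i) a := by
  ext t
  by_cases ht : ∃ l, j l = t
  · obtain ⟨l, rfl⟩ := ht
    simp [hj.extend_apply, Function.update_apply, hj.eq_iff]
  · have hti : t ≠ j i := fun h => ht ⟨i, h.symm⟩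
    simp [Function.extend_apply' _ _ _ ht, hti]

/-- The homomorphism of tensor powers induced by an injection of index types, putting `1` in the
new positions. -/
noncomputable def PiTensorProduct.extendAlgHom (k A : Type*) [Field k] [Ring A] [Algebra k A]
    {ι κ : Type*} (j : ι → κ) (hj : Function.Injective j) :
    (⨂[k] (_ : ι), A) →ₐ[k] (⨂[k] (_ : κ), A) :=
  PiTensorProduct.liftAlgHom
    { toFun x := PiTensorProduct.tprod k (Function.extend j x 1)
      map_update_add' := by
        classical
        intro _ x i a b
        simp [hj.extend_update]
      map_update_smul' := by
        classical
        intro _ x i c a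
        simp [hj.extend_update] }
    (by
      rw [PiTensorProduct.one_def]
      exact congrArg (PiTensorProduct.tprod k) (Function.extend_one j))
    (fun x y => by
      simp only [MultilinearMap.coe_mk, PiTensorProduct.tprod_mul_tprod]
      rw [← Function.extend_mul, mul_one])

theorem PiTensorProduct.extendAlgHom_tprod {k A : Type*} [Field k] [Ring A] [Algebra k A]
    {ι κ : Type*} (j : ι → κ) (hj : Function.Injective j) (x : ι → A) :
    PiTensorProduct.extendAlgHom k A j hj (PiTensorProduct.tprod k x) =
      PiTensorProduct.tprod k (Function.extend j x 1) := by
  simp [PiTensorProduct.extendAlgHom, PiTensorProduct.liftAlgHom]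

theorem PiTensorProduct.commute_extendAlgHom {k A : Type*} [Field k] [Ring A] [Algebra k A]
    {ι ι' κ : Type*} (j : ι → κ) (hj : Function.Injective j) (j' : ι' → κ)
    (hj' : Function.Injective j') (hjj' : ∀ i i', j i ≠ j' i') (x : ⨂[k] (_ : ι), A)
    (y : ⨂[k] (_ : ι'), A) :
    Commute (PiTensorProduct.extendAlgHom k A j hj x)
      (PiTensorProduct.extendAlgHom k A j' hj' y) := by
  induction x using PiTensorProduct.induction_on with
  | add x x' hx hx' => simpa using hx.add_left hx'
  | smul_tprod r x =>
    induction y using PiTensorProduct.induction_on with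
    | add y y' hy hy' => rw [map_add]; exact hy.add_right hy'
    | smul_tprod s y =>
      simp only [map_smul, PiTensorProduct.extendAlgHom_tprod]
      refine ((Commute.tprod ?_).smul_left r).smul_right s
      ext t
      by_cases ht : ∃ l, j l = t
      · obtain ⟨l, rfl⟩ := ht
        have : ¬ ∃ l', j' l' = j l := fun ⟨l', h⟩ => hjj' l l' h.symm
        simp [Function.extend_apply' _ _ _ this]
      · simp [Function.extend_apply' _ _ _ ht]

/-- If the `b`-fold tensor power of `A` is split of degree `t`, then a representation of the
`(a + b)`-fold tensor power yields one of the `a`-fold tensor power, of dimension `t` times smaller. -/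
theorem exists_rep_tensorPower_of_split {k A P : Type*} [Field k] [Ring A] [Algebra k A]
    [AddCommGroup P] [Module k P] [FiniteDimensional k P] {a b t : ℕ} [NeZero t]
    (e : (⨂[k] (_ : Fin b), A) ≃ₐ[k] Matrix (Fin t) (Fin t) k)
    (f : (⨂[k] (_ : Fin (a + b)), A) →ₐ[k] Module.End k P) :
    ∃ (Q : Submodule k P) (_ : (⨂[k] (_ : Fin a), A) →ₐ[k] Module.End k Q),
      t * Module.finrank k Q = Module.finrank k P := by
  refine exists_rep_of_commute_matrix
    ((f.comp (PiTensorProduct.extendAlgHom k A (Fin.natAdd a)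
      (Fin.natAdd_injective b a))).comp e.symm.toAlgHom)
    (f.comp (PiTensorProduct.extendAlgHom k A (Fin.castAdd b) (Fin.castAdd_injective a b)))
    fun X s => ?_
  refine Commute.map (PiTensorProduct.commute_extendAlgHom _ (Fin.natAdd_injective b a) _
    (Fin.castAdd_injective a b) (fun i i' h => ?_) (e.symm X) s) f
  have := congrArg Fin.val h
  simp at this
  omega

section BaseChange

variable {k K D : Type*} [Field k] [Field K] [Algebra k K] [Ring D] [Algebra k D]

/-- A tensor whose coordinates over a basis of the left factor are all scalars is pure. -/
theorem tmul_one_of_coords_mem_bot {ι : Type*} [DecidableEq ι] (b : Module.Basis ι k K)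
    (z : K ⊗[k] D)
    (hz : ∀ i, TensorProduct.equivFinsuppOfBasisLeft b z i ∈ (⊥ : Subalgebra k D)) :
    ∃ c : K, z = c ⊗ₜ 1 := by
  choose r hr using fun i => Algebra.mem_bot.1 (hz i)
  refine ⟨∑ i ∈ (TensorProduct.equivFinsuppOfBasisLeft b z).support, r i • b i, ?_⟩
  conv_lhs => rw [← (TensorProduct.equivFinsuppOfBasisLeft b).symm_apply_apply z]
  rw [TensorProduct.equivFinsuppOfBasisLeft_symm_apply, Finsupp.sum, TensorProduct.sum_tmul]
  refine Finset.sum_congr rfl fun i _ => ?_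
  rw [← hr i, TensorProduct.smul_tmul, Algebra.algebraMap_eq_smul_one]

theorem equivFinsuppOfBasisLeft_one_tmul_mul {ι : Type*} [DecidableEq ι] (b : Module.Basis ι k K)
    (x : D) (z : K ⊗[k] D) (i : ι) :
    TensorProduct.equivFinsuppOfBasisLeft b ((1 ⊗ₜ x) * z) i =
      x * TensorProduct.equivFinsuppOfBasisLeft b z i := by
  induction z with
  | zero => simp
  | tmul c y => simp
  | add y z hy hz => simp only [mul_add, map_add, Finsupp.add_apply, hy, hz]

theorem equivFinsuppOfBasisLeft_mul_one_tmul {ι : Type*} [DecidableEq ι] (b : Module.Basis ι k K)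
    (x : D) (z : K ⊗[k] D) (i : ι) :
    TensorProduct.equivFinsuppOfBasisLeft b (z * (1 ⊗ₜ x)) i =
      TensorProduct.equivFinsuppOfBasisLeft b z i * x := by
  induction z with
  | zero => simp
  | tmul c y => simp
  | add y z hy hz => simp only [add_mul, map_add, Finsupp.add_apply, hy, hz]

theorem isCentral_baseChange (hD : Subalgebra.center k D = ⊥) :
    Algebra.IsCentral K (K ⊗[k] D) where
  out z hz := by
    classical
    obtain ⟨c, rfl⟩ := tmul_one_of_coords_mem_bot (Module.Free.chooseBasis k K) z fun i => by
      rw [← hD, Subalgebra.mem_center_iff]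
      intro x
      rw [← equivFinsuppOfBasisLeft_one_tmul_mul, ← equivFinsuppOfBasisLeft_mul_one_tmul,
        Subalgebra.mem_center_iff.1 hz]
    exact Algebra.mem_bot.2 ⟨c, rfl⟩

end BaseChange

theorem isSimpleRing_baseChange {k K D : Type*} [Field k] [Field K] [Algebra k K]
    [DivisionRing D] [Algebra k D] (hD : Subalgebra.center k D = ⊥) :
    IsSimpleRing (K ⊗[k] D) := by
  classical
  refine .of_eq_bot_or_eq_top fun J => or_iff_not_imp_left.2 fun hJ => ?_
  let b := Module.Free.chooseBasis k K
  let e := TensorProduct.equivFinsuppOfBasisLeft (N := D) b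
  have hne : ∃ n : ℕ, ∃ z ∈ J, z ≠ 0 ∧ (e z).support.card = n := by
    obtain ⟨z, hz, hz0⟩ := SetLike.exists_of_lt (bot_lt_iff_ne_bot.2 hJ)
    exact ⟨_, z, hz, fun h => hz0 (h ▸ zero_mem _), rfl⟩
  obtain ⟨z, hzJ, hz0, hcard⟩ := Nat.find_spec hne
  have hmin (y : K ⊗[k] D) (hy : y ∈ J) (hlt : (e y).support.card < (e z).support.card) :
      y = 0 := by
    by_contra hy0
    exact Nat.find_min hne (hcard ▸ hlt) ⟨y, hy, hy0, rfl⟩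
  obtain ⟨i, hi⟩ : ∃ i, e z i ≠ 0 := by
    by_contra! h
    exact hz0 (e.map_eq_zero_iff.1 (Finsupp.ext h))
  let w := (1 ⊗ₜ (e z i)⁻¹ : K ⊗[k] D) * z
  have hw (j) : e w j = (e z i)⁻¹ * e z j := equivFinsuppOfBasisLeft_one_tmul_mul b _ z j
  have hwi : e w i = 1 := by rw [hw, inv_mul_cancel₀ hi]
  have hwJ : w ∈ J := J.mul_mem_left _ _ hzJ
  obtain ⟨c, hc⟩ := tmul_one_of_coords_mem_bot b w fun j => by
    rw [← hD, Subalgebra.mem_center_iff]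
    intro x
    have hcomm : (1 ⊗ₜ x) * w - w * (1 ⊗ₜ x) = 0 := by
      refine hmin _ (sub_mem (J.mul_mem_left _ _ hwJ) (J.mul_mem_right _ _ hwJ))
        (Finset.card_lt_card ?_)
      have hcoord (l) : e ((1 ⊗ₜ x) * w - w * (1 ⊗ₜ x)) l = x * e w l - e w l * x := by
        rw [map_sub, Finsupp.sub_apply]
        exact congrArg₂ _ (equivFinsuppOfBasisLeft_one_tmul_mul b x w l)
          (equivFinsuppOfBasisLeft_mul_one_tmul b x w l)
      refine Finset.ssubset_iff_subset_ne.2 ⟨fun l hl => ?_, fun h => ?_⟩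
      · rw [Finsupp.mem_support_iff, hcoord] at hl
        rw [Finsupp.mem_support_iff]
        intro h0
        simp [hw, h0] at hl
      · have : i ∈ (e z).support := Finsupp.mem_support_iff.2 hi
        rw [← h, Finsupp.mem_support_iff, hcoord, hwi] at this
        simp at this
    have := congr(e $(sub_eq_zero.1 hcomm) j)
    rwa [equivFinsuppOfBasisLeft_one_tmul_mul, equivFinsuppOfBasisLeft_mul_one_tmul] at this
  have hc0 : c ≠ 0 := by
    rintro rfl
    rw [hc] at hwi
    simp at hwi
  rw [← J.one_mem_iff]
  have h1 : (c⁻¹ ⊗ₜ 1 : K ⊗[k] D) * w = 1 := by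
    rw [hc, Algebra.TensorProduct.tmul_mul_tmul, inv_mul_cancel₀ hc0, mul_one]
    rfl
  exact h1 ▸ J.mul_mem_left _ _ hwJ

theorem exists_algEquiv_matrix_of_isSepClosed {K A : Type*} [Field K] [IsSepClosed K] [Ring A]
    [Algebra K A] [FiniteDimensional K A] [IsSimpleRing A] [Algebra.IsCentral K A] {d : ℕ}
    (hd : Module.finrank K A = d ^ 2) : Nonempty (A ≃ₐ[K] Matrix (Fin d) (Fin d) K) := by
  have : IsArtinianRing A := IsArtinianRing.of_finite K A
  obtain ⟨u, hu, E, _, _, _, ⟨e⟩⟩ :=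
    IsSimpleRing.exists_algEquiv_matrix_divisionRing_finite K A
  have hcM : Algebra.IsCentral K (Matrix (Fin u) (Fin u) E) := .of_algEquiv K A _ e
  have hcE : Algebra.IsCentral K E := by
    refine ⟨fun x hx => ?_⟩
    have : Matrix.scalar (Fin u) x ∈ Subalgebra.center K (Matrix (Fin u) (Fin u) E) := by
      rw [Subalgebra.mem_center_iff]
      intro X
      refine (Matrix.scalar_commute_iff.2 ?_).symm
      ext i j
      simpa using (Subalgebra.mem_center_iff.1 hx (X i j)).symm
    obtain ⟨c, hc⟩ := Algebra.mem_bot.1 (hcM.out this)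
    refine Algebra.mem_bot.2 ⟨c, ?_⟩
    have := congr($hc 0 0)
    simpa [Matrix.algebraMap_matrix_apply] using this
  have hbot : (⊥ : Subalgebra K E) = ⊤ := by
    by_contra hne
    obtain ⟨x, hx, hsep⟩ := JacobsonNoether.exists_separable_and_not_isCentral' hne
    refine hx (Algebra.mem_bot.2 ?_)
    exact minpoly.mem_range_of_degree_eq_one K x
      (IsSepClosed.degree_eq_one_of_irreducible K
        (minpoly.irreducible (Algebra.IsIntegral.isIntegral x)) hsep)
  have hbij : Function.Bijective (Algebra.ofId K E) :=
    ⟨(algebraMap K E).injective, fun x => Algebra.mem_bot.1 (hbot ▸ Algebra.mem_top)⟩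
  let e' : A ≃ₐ[K] Matrix (Fin u) (Fin u) K :=
    e.trans (AlgEquiv.ofBijective _ hbij).symm.mapMatrix
  obtain rfl : u = d := by
    have := e'.toLinearEquiv.finrank_eq
    rw [hd, Module.finrank_matrix] at this
    simp only [Fintype.card_fin, Module.finrank_self, mul_one, ← sq] at this
    exact (Nat.pow_left_injective two_ne_zero this).symm
  exact ⟨e'⟩

/-- The reduced trace takes values in the base field. -/
theorem trace_mem_range_algebraMap {k K A : Type*} [Field k] [Field K] [Algebra k K]
    [IsGalois k K] [Ring A] [Algebra k A] {d : ℕ} [NeZero d]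
    (e : K ⊗[k] A ≃ₐ[K] Matrix (Fin d) (Fin d) K) (a : A) :
    (e (1 ⊗ₜ a)).trace ∈ Set.range (algebraMap k K) := by
  suffices h : ∀ σ : K ≃ₐ[k] K, σ (e (1 ⊗ₜ a)).trace = (e (1 ⊗ₜ a)).trace from
    IntermediateField.mem_bot.1 ((InfiniteGalois.mem_bot_iff_fixed _).2 h)
  intro σ
  let ψ : K ⊗[k] A →ₐ[K] Matrix (Fin d) (Fin d) K :=
    Algebra.TensorProduct.lift (Algebra.ofId K _)
      ((σ.toAlgHom.mapMatrix.comp (e.toAlgHom.restrictScalars k)).comp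
        Algebra.TensorProduct.includeRight)
      (fun x y => Algebra.commutes x _)
  have hψ : ψ (1 ⊗ₜ a) = (e (1 ⊗ₜ a)).map σ := by
    refine (Algebra.TensorProduct.lift_tmul _ _ _ _ _).trans ?_
    rw [map_one, one_mul]
    rfl
  have : IsSimpleRing (K ⊗[k] A) := .of_ringEquiv e.symm.toRingEquiv inferInstance
  have hfin : FiniteDimensional K (K ⊗[k] A) := e.symm.toLinearEquiv.finiteDimensional
  have hinj : Function.Injective ψ := ψ.toRingHom.injective
  have hbij : Function.Bijective ψ := ⟨hinj,
    (LinearMap.injective_iff_surjective_of_finrank_eq_finrank (f := ψ.toLinearMap)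
      e.toLinearEquiv.finrank_eq).1 hinj⟩
  have := Matrix.trace_map (e.symm.trans (AlgEquiv.ofBijective ψ hbij)) (e (1 ⊗ₜ a))
  rw [AlgEquiv.trans_apply, AlgEquiv.symm_apply_apply, AlgEquiv.coe_ofBijective, hψ] at this
  exact (AddMonoidHom.map_trace σ _).trans this

/-- Dual bases for the reduced trace form give an element of `A ⊗ A` which acts as the swap. -/
theorem exists_casimir {k K A : Type*} [Field k] [Field K] [Algebra k K]
    [IsGalois k K] [Ring A] [Algebra k A] [FiniteDimensional k A] {d : ℕ} [NeZero d]
    (e : K ⊗[k] A ≃ₐ[K] Matrix (Fin d) (Fin d) K) :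
    ∃ (N : ℕ) (b b' : Fin N → A), ∀ p q r s,
      ∑ l, e (1 ⊗ₜ b l) p q * e (1 ⊗ₜ b' l) r s = if q = r ∧ p = s then 1 else 0 := by
  choose τ hτ using trace_mem_range_algebraMap e
  have hsmul (c : k) (x : A) : e (1 ⊗ₜ (c • x)) = algebraMap k K c • e (1 ⊗ₜ x) := by
    rw [← map_smul, TensorProduct.tmul_smul, algebraMap_smul]
  let T : A →ₗ[k] k :=
    { toFun := τ
      map_add' x y := (algebraMap k K).injective (by
        simp [hτ, TensorProduct.tmul_add])
      map_smul' c x := (algebraMap k K).injective (by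
        rw [hτ, hsmul, Matrix.trace_smul, ← hτ, RingHom.id_apply, smul_eq_mul, smul_eq_mul,
          map_mul]) }
  have hT (x : A) : algebraMap k K (T x) = (e (1 ⊗ₜ x)).trace := hτ x
  let B : LinearMap.BilinForm k A := (LinearMap.mul k A).compr₂ T
  have hBT (x y : A) : algebraMap k K (B x y) = (e (1 ⊗ₜ x) * e (1 ⊗ₜ y)).trace := by
    simp [B, hT, ← map_mul]
  have hB : B.Nondegenerate := by
    refine .ofSeparatingLeft fun x hx => ?_
    have h (z : K ⊗[k] A) : (e (1 ⊗ₜ x) * e z).trace = 0 := by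
      induction z with
      | zero => simp
      | add y z hy hz => simp [mul_add, hy, hz]
      | tmul c y =>
        have : (c ⊗ₜ y : K ⊗[k] A) = c • (1 ⊗ₜ y) := by simp [TensorProduct.smul_tmul']
        rw [this, map_smul, mul_smul_comm, Matrix.trace_smul, ← hBT, hx, map_zero, smul_zero]
    have h0 : e (1 ⊗ₜ x) = 0 := by
      ext i j
      have := h (e.symm (Matrix.single j i 1))
      simpa [Matrix.trace_mul_single] using this
    have h1 : (1 ⊗ₜ x : K ⊗[k] A) = 0 := e.map_eq_zero_iff.1 h0
    exact Algebra.TensorProduct.includeRight_injective (algebraMap k K).injective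
      (h1.trans (map_zero Algebra.TensorProduct.includeRight).symm)
  let b := Module.finBasis k A
  let b' := B.dualBasis hB b
  refine ⟨_, b, b', fun p q r s => ?_⟩
  have hexp (z : K ⊗[k] A) :
      e z = ∑ l, (e z * e (1 ⊗ₜ b l)).trace • e (1 ⊗ₜ b' l) := by
    induction z with
    | zero => simp
    | add y z hy hz =>
      simp only [map_add, add_mul, Matrix.trace_add, add_smul, Finset.sum_add_distrib, ← hy, ← hz]
    | tmul c y =>
      have : (c ⊗ₜ y : K ⊗[k] A) = c • (1 ⊗ₜ y) := by simp [TensorProduct.smul_tmul']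
      simp only [this, map_smul, smul_mul_assoc, Matrix.trace_smul, smul_assoc,
        ← Finset.smul_sum, ← hBT]
      congr 1
      conv_lhs => rw [← b'.sum_repr y]
      simp only [TensorProduct.tmul_sum, map_sum, b', LinearMap.BilinForm.dualBasis_repr_apply]
      exact Finset.sum_congr rfl fun l _ => hsmul _ _
  have := congr($(hexp (e.symm (Matrix.single q p 1))) r s)
  simp only [AlgEquiv.apply_symm_apply, Matrix.trace_single_mul, Matrix.sum_apply,
    Matrix.smul_apply, smul_eq_mul, one_mul] at this
  rw [← this, Matrix.single_apply]

/-- The Kronecker product of a finite family of square matrices, as a multilinear map. -/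
def Matrix.piKronecker (K ι n : Type*) [Field K] [Fintype ι] :
    MultilinearMap K (fun _ : ι => Matrix n n K) (Matrix (ι → n) (ι → n) K) where
  toFun X := .of fun f g => ∏ i, X i (f i) (g i)
  map_update_add' X i x y := by
    ext f g
    exact ((MultilinearMap.mkPiAlgebra K ι K).compLinearMap fun i =>
      Matrix.entryLinearMap K K (f i) (g i)).map_update_add X i x y
  map_update_smul' X i c x := by
    ext f g
    exact ((MultilinearMap.mkPiAlgebra K ι K).compLinearMap fun i =>
      Matrix.entryLinearMap K K (f i) (g i)).map_update_smul X i c x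

theorem Matrix.piKronecker_apply {K ι n : Type*} [Field K] [Fintype ι] (X : ι → Matrix n n K)
    (f g : ι → n) : Matrix.piKronecker K ι n X f g = ∏ i, X i (f i) (g i) := rfl

section TensorPower

variable {k K A ι n : Type*} [Field k] [Field K] [Algebra k K] [Ring A] [Algebra k A]
  [Fintype ι] [DecidableEq ι] [Fintype n] [DecidableEq n]

/-- The representation of a tensor power of `A` induced by a matrix representation of `A`. -/
noncomputable def AlgHom.piKronecker (φ : A →ₐ[k] Matrix n n K) :
    (⨂[k] (_ : ι), A) →ₐ[k] Matrix (ι → n) (ι → n) K :=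
  PiTensorProduct.liftAlgHom
    (((Matrix.piKronecker K ι n).restrictScalars k).compLinearMap fun _ => φ.toLinearMap)
    (by
      ext f g
      simp [Matrix.piKronecker_apply, Matrix.one_apply, Finset.prod_ite_zero, funext_iff])
    (fun x y => by
      ext f g
      simp [Matrix.piKronecker_apply, Matrix.mul_apply, Finset.prod_univ_sum,
        Finset.prod_mul_distrib])

theorem AlgHom.piKronecker_tprod (φ : A →ₐ[k] Matrix n n K) (x : ι → A) (f g : ι → n) :
    φ.piKronecker (PiTensorProduct.tprod k x) f g = ∏ i, φ (x i) (f i) (g i) := by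
  simp [AlgHom.piKronecker, PiTensorProduct.liftAlgHom, Matrix.piKronecker_apply]

/-- A tensor power of an algebra split by `K` is again split by `K`, through Kronecker products. -/
theorem exists_algEquiv_piKronecker [FiniteDimensional k A]
    (e : K ⊗[k] A ≃ₐ[K] Matrix n n K) :
    ∃ Ψ : K ⊗[k] (⨂[k] (_ : ι), A) ≃ₐ[K] Matrix (ι → n) (ι → n) K,
      ∀ x f g, Ψ (1 ⊗ₜ PiTensorProduct.tprod k x) f g = ∏ i, e (1 ⊗ₜ x i) (f i) (g i) := by
  let φ : A →ₐ[k] Matrix n n K :=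
    (e.toAlgHom.restrictScalars k).comp Algebra.TensorProduct.includeRight
  let Ψ : K ⊗[k] (⨂[k] (_ : ι), A) →ₐ[K] Matrix (ι → n) (ι → n) K :=
    Algebra.TensorProduct.lift (Algebra.ofId K _) φ.piKronecker fun x y => Algebra.commutes x _
  have hΨ (x : ι → A) : Ψ (1 ⊗ₜ PiTensorProduct.tprod k x) =
      Matrix.piKronecker K ι n fun i => e (1 ⊗ₜ x i) := by
    refine (Algebra.TensorProduct.lift_tmul _ _ _ _ _).trans ?_
    ext f g
    rw [map_one, one_mul, AlgHom.piKronecker_tprod]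
    rfl
  let b := Module.finBasis k A
  have hmem (X : ι → Matrix n n K) : Matrix.piKronecker K ι n X ∈ Ψ.range := by
    have hX : X = fun i => ∑ l, (Algebra.TensorProduct.basis K b).repr (e.symm (X i)) l •
        e (1 ⊗ₜ b l) := by
      ext1 i
      rw [← e.apply_symm_apply (X i)]
      conv_lhs => rw [← (Algebra.TensorProduct.basis K b).sum_repr (e.symm (X i))]
      simp
    rw [hX, MultilinearMap.map_sum]
    refine sum_mem fun r _ => ?_
    rw [MultilinearMap.map_smul_univ, ← hΨ]
    exact Ψ.range.smul_mem ⟨_, rfl⟩ _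
  have hsurj : Function.Surjective Ψ := by
    intro X
    change X ∈ Ψ.range
    rw [Matrix.matrix_eq_sum_single X]
    refine sum_mem fun f _ => sum_mem fun g _ => ?_
    have : Matrix.single f g (X f g) =
        X f g • Matrix.piKronecker K ι n fun i => Matrix.single (f i) (g i) 1 := by
      ext f' g'
      simp only [Matrix.smul_apply, Matrix.piKronecker_apply, Matrix.single_apply,
        Finset.prod_ite_zero, funext_iff]
      simp [forall_and]
    rw [this]
    exact Ψ.range.smul_mem (hmem _) _
  have hrank : Module.finrank K (K ⊗[k] (⨂[k] (_ : ι), A)) =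
      Module.finrank K (Matrix (ι → n) (ι → n) K) := by
    have hA : Module.finrank k A = Fintype.card n * Fintype.card n := by
      rw [← Module.finrank_baseChange (R := K), e.toLinearEquiv.finrank_eq, Module.finrank_matrix]
      simp
    rw [Module.finrank_baseChange, Module.finrank_eq_card_basis (Basis.piTensorProduct fun _ => b),
      Module.finrank_matrix]
    simp [hA, mul_pow]
  have hbij : Function.Bijective Ψ :=
    ⟨(LinearMap.injective_iff_surjective_of_finrank_eq_finrank (f := Ψ.toLinearMap) hrank).2 hsurj,
      hsurj⟩
  exact ⟨.ofBijective Ψ hbij, fun x f g => congr($(hΨ x) f g)⟩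

end TensorPower

theorem IsSimpleRing.of_baseChange {k K R : Type*} [Field k] [Field K] [Algebra k K] [Ring R]
    [Algebra k R] (h : IsSimpleRing (K ⊗[k] R)) : IsSimpleRing R := by
  have hinc : Function.Injective (Algebra.TensorProduct.includeRight : R →ₐ[k] K ⊗[k] R) :=
    Algebra.TensorProduct.includeRight_injective (algebraMap k K).injective
  have : Nontrivial R := by
    by_contra hR
    rw [not_nontrivial_iff_subsingleton] at hR
    exact not_subsingleton (K ⊗[k] R) inferInstance
  refine .of_eq_bot_or_eq_top fun J => or_iff_not_imp_right.2 fun hJ => ?_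
  let π : R →ₐ[k] J.ringCon.Quotient := J.ringCon.mkₐ k
  have hπ (x : R) : π x = 0 ↔ x ∈ J := J.ringCon.eq
  have : Nontrivial J.ringCon.Quotient := by
    refine ⟨1, 0, fun h1 => hJ (J.one_mem_iff.1 ?_)⟩
    rw [← hπ, map_one, h1]
  have : Nontrivial (K ⊗[k] J.ringCon.Quotient) := inferInstance
  let f := Algebra.TensorProduct.map (AlgHom.id k K) π
  have hf : Function.Injective f := f.toRingHom.injective
  refine (eq_bot_iff).2 fun x hx => ?_
  have : (1 ⊗ₜ x : K ⊗[k] R) = 0 := hf (by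
    simp [f, (hπ x).2 hx])
  exact hinc (this.trans (map_zero _).symm)

/-- The left ideal of elements fixed under right multiplication by a family of elements. -/
def mulRightFixed (k : Type*) {R τ : Type*} [CommSemiring k] [Semiring R] [Algebra k R]
    (z : τ → R) : Submodule k R where
  carrier := {x | ∀ t, x * z t = x}
  add_mem' hx hy t := by rw [add_mul, hx t, hy t]
  zero_mem' t := zero_mul _
  smul_mem' c x hx t := by rw [smul_mul_assoc, hx t]

/-- The representation on `mulRightFixed k z` by left multiplication. -/
def mulRightFixed.rep (k : Type*) {R τ : Type*} [Field k] [Ring R] [Algebra k R]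
    (z : τ → R) : R →ₐ[k] Module.End k (mulRightFixed k z) :=
  AlgHom.ofLinearMap
    { toFun r := (LinearMap.mulLeft k r).restrict fun x hx t => by
        rw [LinearMap.mulLeft_apply, mul_assoc, hx t]
      map_add' r s := LinearMap.ext fun x => Subtype.ext (add_mul r s (x : R))
      map_smul' c r := LinearMap.ext fun x => Subtype.ext (smul_mul_assoc c r (x : R)) }
    (LinearMap.ext fun x => Subtype.ext (one_mul (x : R)))
    (fun r s => LinearMap.ext fun x => Subtype.ext (mul_assoc r s (x : R)))

theorem finrank_mulRightFixed_baseChange {k K R τ : Type*} [Field k] [Field K]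
    [Algebra k K] [Ring R] [Algebra k R] (z : τ → R) :
    Module.finrank K (mulRightFixed K fun t => (1 ⊗ₜ z t : K ⊗[k] R)) =
      Module.finrank k (mulRightFixed k z) := by
  classical
  rw [← Module.finrank_baseChange (R := K) (M' := mulRightFixed k z)]
  let f := (mulRightFixed k z).subtype.baseChange K
  have hf : Function.Injective f :=
    Module.Flat.lTensor_preserves_injective_linearMap _ Subtype.val_injective
  suffices h : LinearMap.range f = mulRightFixed K fun t => (1 ⊗ₜ z t : K ⊗[k] R) by
    rw [← h, LinearMap.finrank_range_of_inj hf]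
  refine le_antisymm ?_ fun x hx => ?_
  · rintro _ ⟨y, rfl⟩ t
    induction y with
    | zero => simp
    | add x y hx hy => rw [map_add, add_mul, hx, hy]
    | tmul c x => simp [f, x.2 t]
  · let b := Module.Free.chooseBasis k K
    have hmem (i) : TensorProduct.equivFinsuppOfBasisLeft b x i ∈ mulRightFixed k z := fun t => by
      rw [← equivFinsuppOfBasisLeft_mul_one_tmul, hx t]
    rw [← (TensorProduct.equivFinsuppOfBasisLeft b).symm_apply_apply x,
      TensorProduct.equivFinsuppOfBasisLeft_symm_apply, Finsupp.sum]
    exact sum_mem fun i _ => ⟨b i ⊗ₜ ⟨_, hmem i⟩, rfl⟩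

theorem finrank_mulRightFixed_algEquiv {K R S τ : Type*} [Field K] [Ring R] [Algebra K R] [Ring S]
    [Algebra K S] (e : R ≃ₐ[K] S) (z : τ → R) :
    Module.finrank K (mulRightFixed K fun t => e (z t)) =
      Module.finrank K (mulRightFixed K z) := by
  have : (mulRightFixed K fun t => e (z t)) =
      (mulRightFixed K z).map (e.toLinearEquiv : R →ₗ[K] S) := by
    ext x
    rw [Submodule.mem_map_equiv]
    refine forall_congr' fun t => ?_
    rw [← e.symm.injective.eq_iff]
    simp
  rw [this, LinearEquiv.finrank_map_eq]

theorem exists_perm_of_ofFn_perm {m : ℕ} {α : Type*} [LinearOrder α] {g g' : Fin m → α}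
    (h : (List.ofFn g).Perm (List.ofFn g')) : ∃ σ : Equiv.Perm (Fin m), g = g' ∘ σ := by
  have hsort : g ∘ Tuple.sort g = g' ∘ Tuple.sort g' :=
    List.ofFn_injective
      ((((Tuple.sort g).ofFn_comp_perm g).trans
        (h.trans ((Tuple.sort g').ofFn_comp_perm g').symm)).eq_of_pairwise'
        (Tuple.monotone_sort g).sortedLE_ofFn.pairwise
        (Tuple.monotone_sort g').sortedLE_ofFn.pairwise)
  refine ⟨(Tuple.sort g).symm.trans (Tuple.sort g'), ?_⟩
  ext1 i
  simpa using congrFun hsort ((Tuple.sort g).symm i)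

/-- The symmetric power element underlying a tuple. -/
def Sym.ofTuple {m : ℕ} {α : Type*} (g : Fin m → α) : Sym α m :=
  ⟨(List.ofFn g : Multiset α), by simp⟩

theorem Sym.ofTuple_surjective {m : ℕ} {α : Type*} :
    Function.Surjective (Sym.ofTuple : (Fin m → α) → Sym α m) := by
  rintro ⟨s, hs⟩
  induction s using Quotient.inductionOn with | _ l
  obtain rfl : l.length = m := hs
  exact ⟨l.get, Subtype.ext (by simp [Sym.ofTuple])⟩

/-- A function of tuples invariant under transpositions of the entries depends only on the
underlying multiset. -/
theorem eq_of_ofTuple_eq {m : ℕ} {α β : Type*} [LinearOrder α] {F : (Fin m → α) → β}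
    (hF : ∀ i j, i ≠ j → ∀ g, F (g ∘ Equiv.swap i j) = F g) {g g' : Fin m → α}
    (h : Sym.ofTuple g = Sym.ofTuple g') : F g = F g' := by
  obtain ⟨σ, rfl⟩ := exists_perm_of_ofFn_perm (Quotient.exact (congrArg Subtype.val h))
  clear h
  induction σ using Equiv.Perm.swap_induction_on generalizing g' with
  | one => rfl
  | swap_mul σ i j hij ih =>
    rw [Equiv.Perm.coe_mul, ← Function.comp_assoc, ih, hF i j hij]

theorem finrank_mulRightFixed_swap {K τ : Type*} [Field K] {m d : ℕ}
    {z : τ → Matrix (Fin m → Fin d) (Fin m → Fin d) K}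
    (hz : ∀ X, X ∈ mulRightFixed K z ↔
      ∀ i j, i ≠ j → ∀ f g, X f (g ∘ Equiv.swap i j) = X f g) :
    Module.finrank K (mulRightFixed K z) = d ^ m * (d + m - 1).choose m := by
  let L : ((Fin m → Fin d) → Sym (Fin d) m → K) →ₗ[K]
      Matrix (Fin m → Fin d) (Fin m → Fin d) K :=
    { toFun Y := .of fun f g => Y f (Sym.ofTuple g)
      map_add' Y Y' := rfl
      map_smul' c Y := rfl }
  have hL : Function.Injective L := fun Y Y' h => by
    ext f s
    obtain ⟨g, rfl⟩ := Sym.ofTuple_surjective s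
    exact congr($h f g)
  have hrange : LinearMap.range L = mulRightFixed K z := by
    ext X
    rw [hz]
    constructor
    · rintro ⟨Y, rfl⟩ i j - f g
      refine congrArg (Y f) (Subtype.ext (Quotient.sound ?_))
      exact Equiv.Perm.ofFn_comp_perm (Equiv.swap i j) g
    · intro hX
      refine ⟨fun f s => X f (Function.surjInv Sym.ofTuple_surjective s), ?_⟩
      ext f g
      exact eq_of_ofTuple_eq (fun i j hij g => hX i j hij f g)
        (Function.surjInv_eq Sym.ofTuple_surjective _)
  rw [← hrange, LinearMap.finrank_range_of_inj hL]
  simp [Module.finrank_pi_fintype, Sym.card_sym_eq_choose]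

/-- Some element of the tensor power of `A` becomes the permutation matrix of a transposition of
the factors over a splitting field. -/
theorem exists_mul_eq_apply_swap {k K A ι : Type*} [Field k] [Field K] [Algebra k K]
    [IsGalois k K] [Ring A] [Algebra k A] [FiniteDimensional k A] [Fintype ι] [DecidableEq ι]
    {d : ℕ} [NeZero d] (e : K ⊗[k] A ≃ₐ[K] Matrix (Fin d) (Fin d) K)
    (Ψ : K ⊗[k] (⨂[k] (_ : ι), A) ≃ₐ[K] Matrix (ι → Fin d) (ι → Fin d) K)
    (hΨ : ∀ x f g, Ψ (1 ⊗ₜ PiTensorProduct.tprod k x) f g = ∏ i, e (1 ⊗ₜ x i) (f i) (g i))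
    {i j : ι} (hij : i ≠ j) :
    ∃ z : ⨂[k] (_ : ι), A, ∀ (X : Matrix (ι → Fin d) (ι → Fin d) K) f g,
      (X * Ψ (1 ⊗ₜ z)) f g = X f (g ∘ Equiv.swap i j) := by
  obtain ⟨N, b, b', hb⟩ := exists_casimir e
  let x (l : Fin N) : ι → A := fun t => if t = i then b l else if t = j then b' l else 1
  refine ⟨∑ l, PiTensorProduct.tprod k (x l), fun X f g => ?_⟩
  have hZ (f g : ι → Fin d) : Ψ (1 ⊗ₜ ∑ l, PiTensorProduct.tprod k (x l)) f g =
      if f = g ∘ Equiv.swap i j then 1 else 0 := by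
    have hprod (l : Fin N) : ∏ t, e (1 ⊗ₜ x l t) (f t) (g t) =
        (e (1 ⊗ₜ b l) (f i) (g i) * e (1 ⊗ₜ b' l) (f j) (g j)) *
          ∏ t ∈ (Finset.univ.erase i).erase j, if f t = g t then 1 else 0 := by
      rw [← Finset.mul_prod_erase _ _ (Finset.mem_univ i),
        ← Finset.mul_prod_erase _ _ (Finset.mem_erase.2 ⟨hij.symm, Finset.mem_univ j⟩), mul_assoc]
      congr 1
      · simp [x]
      · congr 1
        · simp [x, hij.symm]
        · refine Finset.prod_congr rfl fun t ht => ?_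
          simp only [Finset.mem_erase, Finset.mem_univ, and_true] at ht
          have h1 : e (1 ⊗ₜ 1) = 1 := map_one e
          simp [x, ht, h1, Matrix.one_apply]
    simp only [TensorProduct.tmul_sum, map_sum, Matrix.sum_apply, hΨ, hprod, ← Finset.sum_mul, hb,
      Finset.prod_ite_zero, Finset.prod_const_one]
    rw [ite_zero_mul_ite_zero, one_mul]
    refine if_congr ⟨fun h => ?_, ?_⟩ rfl rfl
    · ext1 t
      by_cases hti : t = i
      · simp [hti, h.1.2]
      · by_cases htj : t = j
        · simp [htj, h.1.1]
        · simpa [Equiv.swap_apply_of_ne_of_ne hti htj] using h.2 t (by simp [hti, htj])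
    · rintro rfl
      refine ⟨by simp, fun t ht => ?_⟩
      simp only [Finset.mem_erase, Finset.mem_univ, and_true] at ht
      simp [Equiv.swap_apply_of_ne_of_ne ht.2 ht.1]
  simp [Matrix.mul_apply, hZ]

/-- The left ideal of elements of a tensor power of `A` which are symmetric on the right provides a
representation of dimension `d ^ m` times that of the `m`-th symmetric power of a `d`-dimensional
space. -/
theorem isSimpleRing_and_exists_rep_tensorPower {k K A : Type*} [Field k] [Field K] [Algebra k K]
    [IsGalois k K] [Ring A] [Algebra k A] [FiniteDimensional k A] {d : ℕ} [NeZero d]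
    (e : K ⊗[k] A ≃ₐ[K] Matrix (Fin d) (Fin d) K) (m : ℕ) :
    IsSimpleRing (⨂[k] (_ : Fin m), A) ∧
      ∃ (I : Submodule k (⨂[k] (_ : Fin m), A))
        (_ : (⨂[k] (_ : Fin m), A) →ₐ[k] Module.End k I),
        Module.finrank k I = d ^ m * (d + m - 1).choose m := by
  obtain ⟨Ψ, hΨ⟩ := exists_algEquiv_piKronecker (ι := Fin m) e
  refine ⟨.of_baseChange (.of_ringEquiv Ψ.symm.toRingEquiv inferInstance), ?_⟩
  choose z hz using fun t : {t : Fin m × Fin m // t.1 ≠ t.2} =>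
    exists_mul_eq_apply_swap e Ψ hΨ t.2
  refine ⟨_, mulRightFixed.rep k z, ?_⟩
  rw [← finrank_mulRightFixed_baseChange (K := K), ← finrank_mulRightFixed_algEquiv Ψ]
  refine finrank_mulRightFixed_swap fun X => ⟨fun h i j hij f g => ?_, fun h t => ?_⟩
  · exact (hz ⟨(i, j), hij⟩ X f g).symm.trans congr($(h ⟨(i, j), hij⟩) f g)
  · ext f g
    rw [hz, h _ _ t.2]

theorem choose_add_pow_mul_modEq_one {p : ℕ} [Fact p.Prime] (s c m : ℕ) (hc : c < p ^ s) :
    (c + p ^ s * m).choose (p ^ s * m) ≡ 1 [MOD p] := by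
  have hp : 0 < p := (Fact.out : p.Prime).pos
  induction s generalizing c with
  | zero =>
    obtain rfl : c = 0 := by simpa using hc
    simp [Nat.ModEq.refl]
  | succ s ih =>
    have h := Choose.choose_modEq_choose_mod_mul_choose_div_nat
      (n := c + p ^ (s + 1) * m) (k := p ^ (s + 1) * m) (p := p)
    rw [pow_succ', mul_assoc, Nat.add_mul_mod_self_left, Nat.mul_mod_right, Nat.choose_zero_right,
      one_mul, Nat.add_mul_div_left _ _ hp, Nat.mul_div_cancel_left _ hp] at h
    rw [pow_succ', mul_assoc]
    exact h.trans (ih _ (Nat.div_lt_of_lt_mul (by rwa [← pow_succ'])))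

theorem not_dvd_add_sub_one_choose {p d m s : ℕ} (hp : p.Prime) (hd : 0 < d) (hds : d ≤ p ^ s)
    (hm : p ^ s ∣ m) : ¬ p ∣ (d + m - 1).choose m := by
  have : Fact p.Prime := ⟨hp⟩
  obtain ⟨m, rfl⟩ := hm
  have h := choose_add_pow_mul_modEq_one (p := p) s (d - 1) m (by omega)
  rw [show d + p ^ s * m - 1 = d - 1 + p ^ s * m by omega]
  intro hdvd
  exact hp.one_lt.ne' (Nat.dvd_one.1 ((h.dvd_iff dvd_rfl).1 hdvd))

theorem exists_rep_tensorPower_of_split_mul.{v} {k A : Type*} {P : Type v} [Field k] [Ring A]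
    [Algebra k A] [AddCommGroup P] [Module k P] [FiniteDimensional k P] {a b t : ℕ} [NeZero t]
    (e : (⨂[k] (_ : Fin b), A) ≃ₐ[k] Matrix (Fin t) (Fin t) k) (c : ℕ)
    (f : (⨂[k] (_ : Fin (a + c * b)), A) →ₐ[k] Module.End k P) :
    ∃ (Q : Type v) (_ : AddCommGroup Q) (_ : Module k Q) (_ : FiniteDimensional k Q)
      (_ : (⨂[k] (_ : Fin a), A) →ₐ[k] Module.End k Q),
      t ^ c * Module.finrank k Q = Module.finrank k P := by
  induction c generalizing P with
  | zero =>
    rw [zero_mul, add_zero] at f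
    exact ⟨P, _, _, inferInstance, f, by simp⟩
  | succ c ih =>
    rw [add_one_mul, ← add_assoc] at f
    obtain ⟨Q, f', hQ⟩ := exists_rep_tensorPower_of_split e f
    obtain ⟨Q', _, _, hfin, f'', hQ'⟩ := ih f'
    exact ⟨Q', _, _, hfin, f'', by rw [← hQ, ← hQ', pow_succ', mul_assoc]⟩

theorem finrank_tensorPower (k A : Type*) [Field k] [Ring A] [Algebra k A]
    [FiniteDimensional k A] (m : ℕ) :
    Module.finrank k (⨂[k] (_ : Fin m), A) = Module.finrank k A ^ m := by
  rw [Module.finrank_eq_card_basis (Basis.piTensorProduct fun _ => Module.finBasis k A)]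
  simp

/-- If the `n`-fold tensor power of `D` is split, the representation on symmetric elements of the
`(r + c * n)`-fold tensor power descends to the `r`-fold one. -/
theorem isSimpleRing_and_exists_rep_of_split.{u, v} {k : Type u} [Field k] {D : Type v}
    [DivisionRing D] [Algebra k D] [FiniteDimensional k D] (hD : Subalgebra.center k D = ⊥) {d : ℕ}
    (hd : d ^ 2 = Module.finrank k D) (hd0 : 0 < d) {n t : ℕ} (ht : 0 < t)
    (e : (⨂[k] (_ : Fin n), D) ≃ₐ[k] Matrix (Fin t) (Fin t) k) (r c : ℕ) :
    IsSimpleRing (⨂[k] (_ : Fin r), D) ∧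
      ∃ (Q : Type (max v u)) (_ : AddCommGroup Q) (_ : Module k Q) (_ : FiniteDimensional k Q)
        (_ : (⨂[k] (_ : Fin r), D) →ₐ[k] Module.End k Q),
        Module.finrank k Q = d ^ r * (d + (r + c * n) - 1).choose (r + c * n) := by
  let K := SeparableClosure k
  have : NeZero d := ⟨hd0.ne'⟩
  have : NeZero t := ⟨ht.ne'⟩
  have := isSimpleRing_baseChange (K := K) hD
  have := isCentral_baseChange (K := K) hD
  obtain ⟨ε⟩ := exists_algEquiv_matrix_of_isSepClosed (K := K) (A := K ⊗[k] D) (d := d)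
    (by rw [Module.finrank_baseChange, hd])
  refine ⟨(isSimpleRing_and_exists_rep_tensorPower ε r).1, ?_⟩
  obtain ⟨I, f, hI⟩ := (isSimpleRing_and_exists_rep_tensorPower ε (r + c * n)).2
  obtain ⟨Q, _, _, hfin, f', hQ⟩ := exists_rep_tensorPower_of_split_mul e c f
  refine ⟨Q, _, _, hfin, f', ?_⟩
  obtain rfl : t = d ^ n := by
    have := e.toLinearEquiv.finrank_eq
    rw [finrank_tensorPower, ← hd, Module.finrank_matrix] at this
    simp only [Fintype.card_fin, Module.finrank_self, mul_one, ← sq] at this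
    rw [pow_right_comm] at this
    exact (Nat.pow_left_injective two_ne_zero this).symm
  refine Nat.eq_of_mul_eq_mul_left (pow_pos ht c) (hQ.trans (hI.trans ?_))
  rw [pow_add, mul_comm c n, pow_mul]
  ring

/-- If `D` is a central division algebra over `k` of degree `d > 1`, and `n` is the least
positive integer such that `D^{⊗ n}` is isomorphic as a `k`-algebra to a matrix algebra
`M_t(k)` for some positive integer `t` (i.e. `n` is the period of `D`), then a prime `q`
divides `n` if and only if it divides `d`. -/
theorem period_prime_dvd_iff_degree_prime_dvd
    {k : Type*} [Field k]
    (D : Type*) [DivisionRing D] [Algebra k D] [FiniteDimensional k D]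
    (hD : Subalgebra.center k D = ⊥) (d : ℕ) (hd : d ^ 2 = Module.finrank k D)
    (hd1 : 1 < d) (n : ℕ) (hn : 0 < n)
    (hsplit : ∃ t : ℕ, 0 < t ∧
      Nonempty ((⨂[k] (_ : Fin n), D) ≃ₐ[k] Matrix (Fin t) (Fin t) k))
    (hmin : ∀ n' : ℕ, 0 < n' →
      (∃ t : ℕ, 0 < t ∧
        Nonempty ((⨂[k] (_ : Fin n'), D) ≃ₐ[k] Matrix (Fin t) (Fin t) k)) → n ≤ n') :
    ∀ q : ℕ, q.Prime → (q ∣ n ↔ q ∣ d) := by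
  obtain ⟨t, ht, ⟨e⟩⟩ := hsplit
  have hd0 : 0 < d := by omega
  refine fun q hq => ⟨fun hqn => ?_, fun hqd => ?_⟩
  · suffices h : n ∣ d ^ d from hq.dvd_of_dvd_pow (hqn.trans h)
    rw [Nat.dvd_iff_mod_eq_zero]
    by_contra hr
    obtain ⟨hsimple, Q, _, _, _, f, hQ⟩ :=
      isSimpleRing_and_exists_rep_of_split hD hd hd0 ht e (d ^ d % n) (d ^ d / n)
    rw [mul_comm (d ^ d / n), Nat.mod_add_div] at hQ
    have hcop : (d ^ (d ^ d % n)).Coprime ((d + d ^ d - 1).choose (d ^ d)) :=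
      .pow_left _ (Nat.coprime_of_dvd fun p hp hpd =>
        not_dvd_add_sub_one_choose hp hd0 (Nat.lt_pow_self hp.one_lt).le (pow_dvd_pow_of_dvd hpd d))
    obtain ⟨e'⟩ := exists_algEquiv_matrix_of_coprime_rep f
      (by rw [finrank_tensorPower, ← hd, pow_right_comm]) hQ hcop
    exact (hmin _ (Nat.pos_of_ne_zero hr) ⟨_, pow_pos hd0 _, ⟨e'⟩⟩).not_gt (Nat.mod_lt _ hn)
  · by_contra hqn
    let m := q ^ (n.totient * d)
    obtain ⟨c, hc⟩ : ∃ c, 1 + c * n = m := by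
      have hmod : 1 ≡ m [MOD n] := by
        simpa [m, pow_mul] using
          ((Nat.ModEq.pow_totient ((hq.coprime_iff_not_dvd).2 hqn)).pow d).symm
      have hm : 1 ≤ m := Nat.one_le_pow _ _ hq.pos
      obtain ⟨c, hc⟩ := (Nat.modEq_iff_dvd' hm).1 hmod
      exact ⟨c, by rw [mul_comm, ← hc]; omega⟩
    obtain ⟨-, Q, _, _, _, f, hQ⟩ := isSimpleRing_and_exists_rep_of_split hD hd hd0 ht e 1 c
    have hdvd := finrank_dvd_finrank_of_rep
      (f.comp (PiTensorProduct.singleAlgHom (R := k) (A := fun _ : Fin 1 => D) 0))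
    rw [← hd, hQ, hc, pow_one, sq, Nat.mul_dvd_mul_iff_left hd0] at hdvd
    refine not_dvd_add_sub_one_choose hq hd0 ?_ (dvd_refl m) (hqd.trans hdvd)
    calc d ≤ n.totient * d := Nat.le_mul_of_pos_left d (Nat.totient_pos.2 hn)
      _ ≤ m := (Nat.lt_pow_self hq.one_lt).le
end
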